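/- Let β_* ∈ (β̲_*, 1), β^* ∈ (β_*, 1), let (α_n) be any sequence with α_n ∈ [β_*, β^*] for all n, and let (x_n) be defined by x_{n+1} = G(α_n, x_n) with x₀ > 0. Then x_n → K as n → ∞. -/

import Mathlib

open Set Filter

/-- Prediction-based control map `G β x = (1−β) f x + β x`. -/
noncomputable def G (f : ℝ → ℝ) (β x : ℝ) : ℝ := (1 - β) * f x + β * x

/-!
Let `m ≤ M` be the extreme cluster points of the sequence. By compactness each is the image of a
cluster point under some limiting control: `m = G δ y` and `M = G δ' z` with `y, z ∈ [m, M]`. As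
`G δ` moves points towards `K`, this forces `z ≤ K ≤ y`, and both are `K` as soon as one of them is.
If `z < K < y`, a weaker control overshoots further, so `G β y ≤ z` and `y ≤ G β z` for the fixed
`β` below all the `α n`; the intermediate value theorem then yields `w ∈ (K, y]` with `G β w = z`,
whence `G β (G β w) = G β z ≥ y ≥ w`, which the choice of `β` forbids.

The same argument shows that `G β (G β x) < x` to the right of `K` implies `x < G β (G β x)` to its
left. With `L` the Lipschitz constant on the right, `β = L / (1 + L)` keeps `G β x ≥ K` for
`x ∈ (K, fm)` and is therefore admissible.
-/

open Topology

section TopologicalDynamics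

theorem exists_mapClusterPt_preimage {A X : Type*} [TopologicalSpace A] [TopologicalSpace X]
    [T2Space X] {t : Set A} {s : Set X} (ht : IsCompact t) (hs : IsCompact s) {g : A × X → X}
    (hg : ContinuousOn g (t ×ˢ s)) {a : ℕ → A} {x : ℕ → X} (ha : ∀ n, a n ∈ t)
    (hx : ∀ n, x n ∈ s) (hrec : ∀ n, x (n + 1) = g (a n, x n)) {p : X}
    (hp : MapClusterPt p atTop x) :
    ∃ b ∈ t, ∃ q, MapClusterPt q atTop x ∧ g (b, q) = p := by
  obtain ⟨U, hU, hUp⟩ := mapClusterPt_iff_ultrafilter.1 hp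
  have hmem : ∀ n, (a n, x n) ∈ t ×ˢ s := fun n => ⟨ha n, hx n⟩
  have hpred : Tendsto (fun n => n - 1) (U : Filter ℕ) atTop :=
    (tendsto_sub_atTop_nat 1).mono_left hU
  obtain ⟨⟨b, q⟩, hbq, (hlim : Tendsto (fun n => (a (n - 1), x (n - 1))) U (𝓝 (b, q)))⟩ :=
    (ht.prod hs).ultrafilter_le_nhds (U.map fun n => (a (n - 1), x (n - 1)))
      (le_principal_iff.2 (mem_map.2 (Eventually.of_forall fun n => hmem (n - 1))))
  have hq : MapClusterPt q (U : Filter ℕ) fun n => x (n - 1) :=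
    ((continuous_snd.tendsto _).comp hlim).mapClusterPt
  have himage : Tendsto (fun n => g (a (n - 1), x (n - 1))) U (𝓝 (g (b, q))) :=
    (hg (b, q) hbq).tendsto.comp
      (tendsto_nhdsWithin_iff.2 ⟨hlim, Eventually.of_forall fun n => hmem (n - 1)⟩)
  have hshift : x =ᶠ[U] fun n => g (a (n - 1), x (n - 1)) := by
    filter_upwards [hU (eventually_ge_atTop 1)] with n hn
    rw [← hrec, Nat.sub_add_cancel hn]
  exact ⟨b, hbq.1, q, hq.of_comp hpred, tendsto_nhds_unique (himage.congr' hshift.symm) hUp⟩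

theorem exists_isLeast_isGreatest_mapClusterPt {ι α : Type*} [LinearOrder α] [TopologicalSpace α]
    [OrderTopology α] {l : Filter ι} [l.NeBot] {u : ι → α} {s : Set α} (hs : IsCompact s)
    (hu : ∀ᶠ i in l, u i ∈ s) :
    ∃ m M, IsLeast {p | MapClusterPt p l u} m ∧ IsGreatest {p | MapClusterPt p l u} M := by
  have hcompact : IsCompact {p | MapClusterPt p l u} :=
    hs.of_isClosed_subset isClosed_setOfPred_clusterPt
      fun _ hp => hs.isClosed.mem_of_mapClusterPt hp hu
  obtain ⟨p, _, hp⟩ := hs.exists_mapClusterPt (le_principal_iff.2 hu)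
  obtain ⟨m, hm⟩ := hcompact.exists_isLeast ⟨p, hp⟩
  obtain ⟨M, hM⟩ := hcompact.exists_isGreatest ⟨p, hp⟩
  exact ⟨m, M, hm, hM⟩

theorem eq_self_of_le_left_of_le_right {α : Type*} [LinearOrder α] [DenselyOrdered α]
    [NoMaxOrder α] [TopologicalSpace α] [OrderTopology α] {f : α → α} {a K : α} (haK : a < K)
    (hf : ContinuousAt f K) (hleft : ∀ x ∈ Ioo a K, x ≤ f x) (hright : ∀ x ∈ Ioi K, f x ≤ x) :
    f K = K := by
  apply le_antisymm
  · exact hf.continuousWithinAt.closure_le (by simp) continuousWithinAt_id hright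
  · exact continuousWithinAt_id.closure_le (by simp [closure_Ioo haK.ne, haK.le])
      hf.continuousWithinAt hleft

theorem exists_le_comp_self {α : Type*} [ConditionallyCompleteLinearOrder α] [DenselyOrdered α]
    [TopologicalSpace α] [OrderTopology α] {g : α → α} {K y z : α} (hg : ContinuousOn g (Icc K y))
    (hgK : g K = K) (hKy : K ≤ y) (hzK : z < K) (hgy : g y ≤ z) (hgz : y ≤ g z) :
    ∃ w ∈ Ioc K y, w ≤ g (g w) := by
  obtain ⟨w, hw, rfl⟩ := intermediate_value_Icc' hKy hg ⟨hgy, hgK.symm ▸ hzK.le⟩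
  have hKw : K ≠ w := by
    rintro rfl
    exact hzK.ne hgK
  exact ⟨w, ⟨hw.1.lt_of_ne hKw, hw.2⟩, hw.2.trans hgz⟩

end TopologicalDynamics

section ControlMap

variable {f : ℝ → ℝ} {b b' x : ℝ}

theorem G_eq_self (h : f x = x) (b : ℝ) : G f b x = x := by
  rw [G, h]
  ring

theorem lt_G (hb : b < 1) (h : x < f x) : x < G f b x := by
  unfold G
  nlinarith

theorem G_lt (hb : b < 1) (h : f x < x) : G f b x < x := by
  unfold G
  nlinarith

theorem G_lt_apply (hb : 0 < b) (h : x < f x) : G f b x < f x := by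
  unfold G
  nlinarith

theorem G_le_G_of_le_apply (hbb' : b ≤ b') (h : x ≤ f x) : G f b' x ≤ G f b x := by
  unfold G
  nlinarith

theorem G_le_G_of_apply_le (hbb' : b ≤ b') (h : f x ≤ x) : G f b x ≤ G f b' x := by
  unfold G
  nlinarith

theorem G_mem_of_convex {s : Set ℝ} (hs : Convex ℝ s) (hb : b ∈ Icc 0 1) (hx : x ∈ s)
    (hfx : f x ∈ s) : G f b x ∈ s :=
  hs hfx hx (sub_nonneg.2 hb.2) hb.1 (sub_add_cancel 1 b)

theorem le_G_of_sub_le_mul {K L : ℝ} (hb : b ≤ 1) (hbL : (1 - b) * L ≤ b) (hx : K ≤ x)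
    (hL : K - f x ≤ L * (x - K)) : K ≤ G f b x := by
  have hscaled : (1 - b) * (K - f x) ≤ b * (x - K) := calc
    (1 - b) * (K - f x) ≤ (1 - b) * (L * (x - K)) :=
      mul_le_mul_of_nonneg_left hL (sub_nonneg.2 hb)
    _ = (1 - b) * L * (x - K) := by ring
    _ ≤ b * (x - K) := mul_le_mul_of_nonneg_right hbL (sub_nonneg.2 hx)
  unfold G
  linarith

theorem continuousOn_G {s : Set ℝ} (hf : ContinuousOn f s) (b : ℝ) : ContinuousOn (G f b) s := by
  unfold G
  fun_prop

theorem continuousOn_uncurry_G {s : Set ℝ} (hf : ContinuousOn f s) (t : Set ℝ) :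
    ContinuousOn (fun p : ℝ × ℝ => G f p.1 p.2) (t ×ˢ s) := by
  have hf' : ContinuousOn (fun p : ℝ × ℝ => f p.2) (t ×ˢ s) :=
    hf.comp continuousOn_snd fun _ hp => hp.2
  exact ((continuousOn_const.sub continuousOn_fst).mul hf').add
    (continuousOn_fst.mul continuousOn_snd)

end ControlMap

section Equilibrium

variable {f : ℝ → ℝ} {K fm : ℝ}

theorem apply_equilibrium (hf : ContinuousOn f (Ioi 0)) (hK : 0 < K)
    (hbelow : ∀ x ∈ Ioo 0 K, x < f x) (habove : ∀ x ∈ Ioi K, f x < x) : f K = K :=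
  eq_self_of_le_left_of_le_right hK (hf.continuousAt (Ioi_mem_nhds hK))
    (fun x hx => (hbelow x hx).le) fun x hx => (habove x hx).le

theorem exists_mapsTo_Icc (hf : ContinuousOn f (Ioi 0)) (hK : 0 < K)
    (hbelow : ∀ x ∈ Ioo 0 K, x < f x) (habove : ∀ x ∈ Ioi K, 0 < f x ∧ f x < x)
    (hfm : ∀ x ∈ Ioo 0 K, f x ≤ fm) {x₀ : ℝ} (hx₀ : 0 < x₀) :
    ∃ c B, 0 < c ∧ x₀ ∈ Icc c B ∧ MapsTo f (Icc c B) (Icc c B) := by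
  have hfK := apply_equilibrium hf hK hbelow fun x hx => (habove x hx).2
  obtain ⟨B, hx₀B, hKB, hfmB⟩ : ∃ B, x₀ ≤ B ∧ K ≤ B ∧ fm ≤ B :=
    ⟨max x₀ (max K fm), by simp⟩
  obtain ⟨p, hp, hpmin⟩ := isCompact_Icc.exists_isMinOn (nonempty_Icc.2 hKB)
    (hf.mono fun y hy => hK.trans_le hy.1)
  have hfp : 0 < f p := by
    rcases hp.1.eq_or_lt with rfl | hKp
    · rwa [hfK]
    · exact (habove p hKp).1
  refine ⟨min x₀ (min K (f p)), B, by simp [hx₀, hK, hfp], ⟨min_le_left _ _, hx₀B⟩, ?_⟩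
  rintro x ⟨hcx, hxB⟩
  rcases lt_or_ge x K with hxK | hKx
  · have hx : x ∈ Ioo 0 K := ⟨(lt_min hx₀ (lt_min hK hfp)).trans_le hcx, hxK⟩
    exact ⟨hcx.trans (hbelow x hx).le, (hfm x hx).trans hfmB⟩
  · have hle : f x ≤ x := hKx.eq_or_lt.elim (fun h => h ▸ hfK.le) fun h => (habove x h).2.le
    exact ⟨((min_le_right _ _).trans (min_le_right _ _)).trans (hpmin ⟨hKx, hxB⟩), hle.trans hxB⟩

theorem lt_comp_self_of_comp_self_lt (hf : ContinuousOn f (Ioi 0)) (hK : 0 < K)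
    (hbelow : ∀ x ∈ Ioo 0 K, x < f x) (habove : ∀ x ∈ Ioi K, f x < x)
    (hfm : ∀ x ∈ Ioo 0 K, f x ≤ fm) {β : ℝ} (hβ : β ∈ Ioo 0 1)
    (hright : ∀ x ∈ Ioo K fm, G f β (G f β x) < x) :
    ∀ x ∈ Ioo 0 K, x < G f β (G f β x) := by
  intro x hx
  have hGK : G f β K = K := G_eq_self (apply_equilibrium hf hK hbelow habove) β
  have hxG : x < G f β x := lt_G hβ.2 (hbelow x hx)
  rcases lt_trichotomy (G f β x) K with hlt | heq | hgt
  · exact hxG.trans (lt_G hβ.2 (hbelow _ ⟨hx.1.trans hxG, hlt⟩))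
  · rw [heq, hGK]
    exact hx.2
  · by_contra! hGG
    obtain ⟨w, ⟨hKw, hwG⟩, hw⟩ := exists_le_comp_self
      (continuousOn_G (hf.mono fun y hy => hK.trans_le hy.1) β) hGK hgt.le hx.2 hGG le_rfl
    have hGfm : G f β x < fm := (G_lt_apply hβ.1 (hbelow x hx)).trans_le (hfm x hx)
    exact (hright w ⟨hKw, hwG.trans_lt hGfm⟩).not_ge hw

theorem exists_comp_self_lt_of_lipschitz (hf : ContinuousOn f (Ioi 0)) (hK : 0 < K)
    (hbelow : ∀ x ∈ Ioo 0 K, x < f x) (habove : ∀ x ∈ Ioi K, f x < x) {L : ℝ} (hL : 0 < L)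
    (hLip : ∀ x ∈ Ioo K fm, K - f x ≤ L * (x - K)) :
    ∃ β ∈ Ioo (0 : ℝ) 1, ∀ x ∈ Ioo K fm, G f β (G f β x) < x := by
  have hβ1 : L / (1 + L) < 1 := by
    rw [div_lt_one (by positivity)]
    linarith
  have hβL : (1 - L / (1 + L)) * L ≤ L / (1 + L) := by
    apply le_of_eq
    field_simp
    ring
  refine ⟨L / (1 + L), ⟨by positivity, hβ1⟩, fun x hx => ?_⟩
  have hGx : G f (L / (1 + L)) x < x := G_lt hβ1 (habove x hx.1)
  rcases (le_G_of_sub_le_mul hβ1.le hβL hx.1.le (hLip x hx)).eq_or_lt with hKG | hKG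
  · rw [← hKG, G_eq_self (apply_equilibrium hf hK hbelow habove)]
    exact hx.1
  · exact (G_lt hβ1 (habove _ hKG)).trans hGx

/-- The controls `β` whose second iterate `G f β ∘ G f β` increases points of `(a, K)` and decreases
points of `(K, b)`. For `a = f²_m` and `b = f_m` the infimum of this set is the threshold `β̲_*`. -/
def stabilizingControls (f : ℝ → ℝ) (K a b : ℝ) : Set ℝ :=
  {β | β ∈ Ioo (0 : ℝ) 1 ∧ (∀ x ∈ Ioo a K, x < G f β (G f β x)) ∧
    ∀ x ∈ Ioo K b, G f β (G f β x) < x}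

theorem stabilizingControls_nonempty (hf : ContinuousOn f (Ioi 0)) (hK : 0 < K)
    (hbelow : ∀ x ∈ Ioo 0 K, x < f x) (habove : ∀ x ∈ Ioi K, f x < x)
    (hfm : ∀ x ∈ Ioo 0 K, f x ≤ fm) {L : ℝ} (hL : 0 < L)
    (hLip : ∀ x ∈ Ioo K fm, K - f x ≤ L * (x - K)) {a : ℝ} (ha : 0 ≤ a) :
    (stabilizingControls f K a fm).Nonempty := by
  obtain ⟨β, hβ, hright⟩ := exists_comp_self_lt_of_lipschitz hf hK hbelow habove hL hLip
  have hleft := lt_comp_self_of_comp_self_lt hf hK hbelow habove hfm hβ hright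
  exact ⟨β, hβ, fun x hx => hleft x (Ioo_subset_Ioo_left ha hx), hright⟩

theorem eq_equilibrium_of_extreme_preimages (hf : ContinuousOn f (Ioi 0)) (hK : 0 < K)
    (hbelow : ∀ x ∈ Ioo 0 K, x < f x) (habove : ∀ x ∈ Ioi K, f x < x)
    (hfm : ∀ x ∈ Ioo 0 K, f x ≤ fm) {β : ℝ} (hβ : 0 < β)
    (hright : ∀ x ∈ Ioo K fm, G f β (G f β x) < x) {m M y z δ δ' : ℝ} (hm : 0 < m)
    (hy : y ∈ Icc m M) (hz : z ∈ Icc m M) (hδ : δ ∈ Ico β 1) (hδ' : δ' ∈ Ico β 1)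
    (hGy : G f δ y = m) (hGz : G f δ' z = M) : m = K ∧ M = K := by
  have hGK := G_eq_self (apply_equilibrium hf hK hbelow habove)
  have hzK : z ≤ K := by
    by_contra! h
    exact (G_lt hδ'.2 (habove z h)).not_ge (hGz ▸ hz.2)
  have hKy : K ≤ y := by
    by_contra! h
    exact (lt_G hδ.2 (hbelow y ⟨hm.trans_le hy.1, h⟩)).not_ge (hGy ▸ hy.1)
  rcases hKy.eq_or_lt with rfl | hKy
  · have hmK : m = K := hGy ▸ hGK δ
    have hzK' : z = K := le_antisymm hzK (hmK ▸ hz.1)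
    exact ⟨hmK, by rw [← hGz, hzK', hGK]⟩
  rcases hzK.eq_or_lt with rfl | hzK
  · exact absurd (hy.2.trans_eq (hGz.symm.trans (hGK δ'))) hKy.not_ge
  exfalso
  have hfz : z < f z := hbelow z ⟨hm.trans_le hz.1, hzK⟩
  have hyz : y ≤ G f β z := (hy.2.trans_eq hGz.symm).trans (G_le_G_of_le_apply hδ'.1 hfz.le)
  have hzy : G f β y ≤ z :=
    (G_le_G_of_apply_le hδ.1 (habove y hKy).le).trans (hGy.trans_le hz.1)
  obtain ⟨w, ⟨hKw, hwy⟩, hw⟩ := exists_le_comp_self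
    (continuousOn_G (hf.mono fun v hv => hK.trans_le hv.1) β) (hGK β) hKy.le hzK hzy hyz
  have hyfm : y < fm :=
    (hyz.trans_lt (G_lt_apply hβ hfz)).trans_le (hfm z ⟨hm.trans_le hz.1, hzK⟩)
  exact (hright w ⟨hKw, hwy.trans_lt hyfm⟩).not_ge hw

theorem stmt9_general (hf : ContinuousOn f (Ioi 0)) (hK : 0 < K)
    (hbelow : ∀ x ∈ Ioo 0 K, x < f x) (habove : ∀ x ∈ Ioi K, 0 < f x ∧ f x < x)
    (hfm : ∀ x ∈ Ioo 0 K, f x ≤ fm) {β βhi : ℝ} (hβ : 0 < β) (hβhi : βhi < 1)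
    (hright : ∀ x ∈ Ioo K fm, G f β (G f β x) < x) {α : ℕ → ℝ} (hα : ∀ n, α n ∈ Icc β βhi)
    {x : ℕ → ℝ} (hx0 : 0 < x 0) (hrec : ∀ n, x (n + 1) = G f (α n) (x n)) :
    Tendsto x atTop (𝓝 K) := by
  obtain ⟨c, B, hc, hx0B, hmaps⟩ := exists_mapsTo_Icc hf hK hbelow habove hfm hx0
  have hx : ∀ n, x n ∈ Icc c B := by
    intro n
    induction n with
    | zero => exact hx0B
    | succ n ih =>
      rw [hrec]
      exact G_mem_of_convex (convex_Icc c B) (Icc_subset_Icc hβ.le hβhi.le (hα n)) ih (hmaps ih)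
  have hpreimage {p : ℝ} (hp : MapClusterPt p atTop x) :=
    exists_mapClusterPt_preimage isCompact_Icc isCompact_Icc
      (continuousOn_uncurry_G (hf.mono fun y hy => hc.trans_le hy.1) (Icc β βhi)) hα hx hrec hp
  obtain ⟨m, M, hm, hM⟩ :=
    exists_isLeast_isGreatest_mapClusterPt isCompact_Icc (Eventually.of_forall hx (f := atTop))
  obtain ⟨δ, hδ, y, hy, hGy⟩ := hpreimage hm.1
  obtain ⟨δ', hδ', z, hz, hGz⟩ := hpreimage hM.1
  have hm0 : 0 < m :=
    hc.trans_le (isClosed_Icc.mem_of_mapClusterPt hm.1 (Eventually.of_forall hx)).1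
  obtain ⟨rfl, rfl⟩ := eq_equilibrium_of_extreme_preimages hf hK hbelow
    (fun v hv => (habove v hv).2) hfm hβ hright hm0 ⟨hm.2 hy, hM.2 hy⟩ ⟨hm.2 hz, hM.2 hz⟩
    ⟨hδ.1, hδ.2.trans_lt hβhi⟩ ⟨hδ'.1, hδ'.2.trans_lt hβhi⟩ hGy hGz
  exact isCompact_Icc.tendsto_nhds_of_unique_mapClusterPt (Eventually.of_forall hx)
    fun p _ hp => le_antisymm (hM.2 hp) (hm.2 hp)

end Equilibrium

/-- under variable control α_n ∈ [β_*, β^*] ⊂ (β̲_*, 1), any solution with a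
positive initial value converges to K. -/
theorem stmt9
    (f : ℝ → ℝ) (K : ℝ)
    (hf_cont : ContinuousOn f (Set.Ici 0))
    (hf_nonneg : ∀ x, 0 ≤ x → 0 ≤ f x)
    (hf0 : f 0 = 0)
    (hK : 0 < K)
    (hbelow : ∀ x ∈ Set.Ioo 0 K, x < f x)
    (habove : ∀ x ∈ Set.Ioi K, 0 < f x ∧ f x < x)
    (fm f2m : ℝ)
    (hfm : IsGreatest (f '' Set.Icc 0 K) fm)
    (hfmK : K < fm)
    (hf2m : IsGLB (f '' Set.Ioo K fm) f2m)
    (xmax : ℝ) (hxmax_mem : xmax ∈ Set.Icc 0 K) (hxmax_val : f xmax = fm)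
    (hxmax_largest : ∀ y ∈ Set.Icc 0 K, f y = fm → y ≤ xmax)
    (Lm Lp : ℝ) (hLp : 1 < Lp) (hLmLp : Lp ≤ Lm)
    (hLipL : ∀ x ∈ Set.Ioo xmax K, f x - K ≤ Lm * (K - x))
    (hLipR : ∀ x ∈ Set.Ioo K fm, K - f x ≤ Lp * (x - K))
    (βunder : ℝ)
    (hβunder : βunder = sInf {β : ℝ | β ∈ Set.Ioo (0:ℝ) 1 ∧
          (∀ x ∈ Set.Ioo f2m K, x < G f β (G f β x)) ∧
          (∀ x ∈ Set.Ioo K fm, G f β (G f β x) < x)})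
    (βlo βhi : ℝ) (hβlo : βunder < βlo) (hβ : βlo < βhi) (hβhi : βhi < 1)
    (α : ℕ → ℝ) (hα : ∀ n, α n ∈ Set.Icc βlo βhi)
    (x : ℕ → ℝ) (hx0 : 0 < x 0)
    (hrec : ∀ n, x (n + 1) = G f (α n) (x n)) :
    Tendsto x atTop (nhds K) := by
  have hf : ContinuousOn f (Ioi 0) := hf_cont.mono Ioi_subset_Ici_self
  have hle : ∀ y ∈ Ioo 0 K, f y ≤ fm := fun y hy => hfm.2 ⟨y, Ioo_subset_Icc_self hy, rfl⟩
  have hf2m0 : 0 ≤ f2m := hf2m.2 (forall_mem_image.2 fun y hy => (habove y hy.1).1.le)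
  have hne : (stabilizingControls f K f2m fm).Nonempty :=
    stabilizingControls_nonempty hf hK hbelow (fun y hy => (habove y hy).2) hle
      (zero_lt_one.trans hLp) hLipR hf2m0
  obtain ⟨β, ⟨hβ01, -, hright⟩, hββlo⟩ :=
    exists_lt_of_csInf_lt hne (hβunder.symm.trans_lt hβlo)
  exact stmt9_general hf hK hbelow habove hle hβ01.1 hβhi hright
    (fun n => Icc_subset_Icc_left hββlo.le (hα n)) hx0 hrec
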